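/- Let R be a regular n-polytope. Then for every flag Λ of R, the stabilizer of Λ in the monodromy group Mon(R), acting on the set of flags, is the trivial subgroup. -/

import Mathlib

/-- Two flags are `j`-adjacent (w.r.t. the rank function `rk`): they are distinct
and agree in every face whose rank is different from `j`. -/
def IsPolytopeAdj {P : Type*} [PartialOrder P] (rk : P → ℤ) (j : ℤ) (c d : Flag P) : Prop :=
  c ≠ d ∧ ∀ z : P, rk z ≠ j → (z ∈ c ↔ z ∈ d)

/-- `P`, with strictly monotone rank function `rk` onto `{-1, 0, ..., n}`, is an
abstract polytope of rank `n`: it has a least and a greatest face, satisfies the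
diamond condition and is strongly flag-connected. -/
structure IsAbstractPolytope {P : Type*} [PartialOrder P] (n : ℤ) (rk : P → ℤ) : Prop where
  neg_one_le : -1 ≤ n
  strictMono : ∀ {F G : P}, F < G → rk F < rk G
  rank_range : Set.range rk = Set.Icc (-1 : ℤ) n
  exists_bot : ∃ F₀ : P, ∀ F, F₀ ≤ F
  exists_top : ∃ Fn : P, ∀ F, F ≤ Fn
  diamond : ∀ F G : P, F < G → rk G = rk F + 2 →
    ∃ H₁ H₂ : P, H₁ ≠ H₂ ∧ ∀ H : P, (F < H ∧ H < G) ↔ (H = H₁ ∨ H = H₂)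
  strongly_connected : ∀ F G : P, F ≤ G →
    ∀ c d : Flag ↥(Set.Icc F G),
      Relation.ReflTransGen
        (fun c' d' => ∃ j : ℤ, IsPolytopeAdj (fun H => rk H.val) j c' d') c d

/-- A covering of polytopes: an order- and rank-preserving map sending flags to
flags and sending `j`-adjacent pairs of flags to `j`-adjacent pairs of flags. -/
def IsPolytopeCovering {R Q : Type*} [PartialOrder R] [PartialOrder Q]
    (rkR : R → ℤ) (rkQ : Q → ℤ) (η : R → Q) : Prop :=
  Monotone η ∧ (∀ F : R, rkQ (η F) = rkR F) ∧
  (∀ c : Flag R, ∃ c' : Flag Q, η '' ↑c = ↑c') ∧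
  (∀ (j : ℤ) (c d : Flag R) (c' d' : Flag Q), η '' ↑c = ↑c' → η '' ↑d = ↑d' →
    IsPolytopeAdj rkR j c d → IsPolytopeAdj rkQ j c' d')

/-- A polytope is regular if its automorphism group (order-preserving bijections)
acts transitively on the set of flags. -/
def IsRegularPolytope {P : Type*} [PartialOrder P] : Prop :=
  ∀ c d : Flag P, ∃ e : P ≃o P, e '' (↑c : Set P) = (↑d : Set P)

/-- An abstract polytope of rank `n`, bundled with its carrier. -/
structure BundledPolytope (n : ℤ) where
  carrier : Type
  [po : PartialOrder carrier]
  rk : carrier → ℤ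
  isPolytope : IsAbstractPolytope n rk

attribute [instance] BundledPolytope.po


namespace IsPolytopeAdj

variable {P : Type*} [PartialOrder P] {rk : P → ℤ} {j : ℤ} {c d : Flag P}

/-- Each rank occurring in a flag occurs in every adjacent flag. -/
theorem exists_mem_rank_eq (h : IsPolytopeAdj rk j c d) {r : ℤ} (hc : ∃ x ∈ c, rk x = r) :
    ∃ x ∈ d, rk x = r := by
  obtain ⟨x, hx, rfl⟩ := hc
  by_cases hj : rk x = j
  · by_contra! hd
    have hdc : (d : Set P) ⊆ c := fun y hy => (h.2 y fun e => hd y hy (e.trans hj.symm)).2 hy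
    exact h.1 (Flag.ext (d.max_chain' c.chain_le hdc)).symm
  · exact ⟨x, (h.2 x hj).1 hx, rfl⟩

/-- A rank-preserving automorphism maps `j`-adjacent flags to `j`-adjacent flags. -/
theorem map (h : IsPolytopeAdj rk j c d) (e : P ≃o P) (he : ∀ x, rk (e x) = rk x) :
    IsPolytopeAdj rk j (Flag.map e c) (Flag.map e d) := by
  refine ⟨fun hcd => h.1 ((Flag.map e).injective hcd), fun z hz => ?_⟩
  have key := h.2 (e.symm z) (by rwa [← he, e.apply_symm_apply])
  have hmem (s : Flag P) : z ∈ Flag.map e s ↔ e.symm z ∈ s := by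
    rw [← Flag.mem_coe_iff, Flag.coe_map, e.image_eq_preimage_symm]
    rfl
  rw [hmem, hmem, key]

end IsPolytopeAdj

namespace Flag

variable {P : Type*} [PartialOrder P] {rk : P → ℤ}

theorem lt_of_rank_lt (hrk : StrictMono rk) (c : Flag P) {x y : P} (hx : x ∈ c) (hy : y ∈ c)
    (h : rk x < rk y) : x < y := by
  rcases c.le_or_le hx hy with hxy | hyx
  · exact lt_of_le_of_ne hxy (by rintro rfl; exact h.false)
  · exact absurd (hrk.monotone hyx) h.not_ge

theorem eq_of_rank_eq (hrk : StrictMono rk) (c : Flag P) {x y : P} (hx : x ∈ c) (hy : y ∈ c)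
    (h : rk x = rk y) : x = y := by
  rcases c.le_or_le hx hy with hxy | hyx
  · exact hxy.eq_of_not_lt fun hlt => (hrk hlt).ne h
  · exact (hyx.eq_of_not_lt fun hlt => (hrk hlt).ne h.symm).symm

/-- Flags that agree away from rank `j` and share a face of rank `j` are equal. -/
theorem eq_of_mem_of_mem (hrk : StrictMono rk) {j : ℤ} {c d : Flag P} {x : P}
    (h : ∀ z, rk z ≠ j → (z ∈ c ↔ z ∈ d)) (hxj : rk x = j) (hc : x ∈ c) (hd : x ∈ d) :
    c = d := by
  refine SetLike.ext fun z => ?_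
  by_cases hz : rk z = j
  · constructor <;> intro hzm
    · rwa [c.eq_of_rank_eq hrk hzm hc (hz.trans hxj.symm)]
    · rwa [d.eq_of_rank_eq hrk hzm hd (hz.trans hxj.symm)]
  · exact h z hz

end Flag

namespace IsAbstractPolytope

variable {P : Type*} [PartialOrder P] {n : ℤ} {rk : P → ℤ}

theorem strictMono_rank (hP : IsAbstractPolytope n rk) : StrictMono rk :=
  fun _ _ h => hP.strictMono h

/-- Every flag of an abstract `n`-polytope has a face of each rank `-1, ..., n`. -/
theorem exists_mem_rank_eq (hP : IsAbstractPolytope n rk) (c : Flag P) {r : ℤ}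
    (hr : r ∈ Set.Icc (-1) n) : ∃ x ∈ c, rk x = r := by
  obtain ⟨F, hF⟩ := hP.exists_bot
  obtain ⟨G, hG⟩ := hP.exists_top
  let e : P ≃o Set.Icc F G :=
    { toFun := fun x => ⟨x, hF x, hG x⟩
      invFun := Subtype.val
      left_inv := fun _ => rfl
      right_inv := fun _ => rfl
      map_rel_iff' := Iff.rfl }
  obtain ⟨x, rfl⟩ : r ∈ Set.range rk := hP.rank_range ▸ hr
  obtain ⟨d, hd⟩ := Flag.exists_mem x
  have transfer : ∃ y ∈ Flag.map e c, rk y.val = rk x := by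
    generalize Flag.map e c = c'
    induction hP.strongly_connected F G (hF G) (Flag.map e d) c' with
    | refl => exact ⟨e x, ⟨x, hd, rfl⟩, rfl⟩
    | tail _ hadj ih => exact hadj.choose_spec.exists_mem_rank_eq ih
  obtain ⟨_, ⟨z, hz, rfl⟩, hzx⟩ := transfer
  exact ⟨z, hz, hzx⟩

theorem rank_mem_Icc (hP : IsAbstractPolytope n rk) (x : P) : rk x ∈ Set.Icc (-1) n :=
  hP.rank_range ▸ Set.mem_range_self x

theorem rank_le_rank_apply (hP : IsAbstractPolytope n rk) (e : P ≃o P) (x : P) :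
    rk x ≤ rk (e x) := by
  suffices h : ∀ r : ℤ, -1 ≤ r → ∀ x, rk x = r → r ≤ rk (e x) from
    h _ (hP.rank_mem_Icc x).1 x rfl
  intro r hr
  induction r, hr using Int.leInduction with
  | base => exact fun x _ => (hP.rank_mem_Icc (e x)).1
  | succ r hr ih =>
    intro x hx
    obtain ⟨c, hc⟩ := Flag.exists_mem x
    have hxn := (hP.rank_mem_Icc x).2
    obtain ⟨y, hy, hyr⟩ := hP.exists_mem_rank_eq c (r := r) ⟨hr, by omega⟩
    have hyx := c.lt_of_rank_lt hP.strictMono_rank hy hc (by omega)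
    have := hP.strictMono (e.strictMono hyx)
    have := ih y hyr
    omega

/-- Automorphisms of an abstract polytope preserve ranks. -/
theorem rank_apply (hP : IsAbstractPolytope n rk) (e : P ≃o P) (x : P) : rk (e x) = rk x := by
  refine le_antisymm ?_ (hP.rank_le_rank_apply e x)
  simpa using hP.rank_le_rank_apply e.symm (e x)

/-- The `j`-adjacent flag of a given flag is unique. -/
theorem adj_unique (hP : IsAbstractPolytope n rk) {j : ℤ} (hj₀ : 0 ≤ j) (hjn : j < n)
    {c d d' : Flag P} (hd : IsPolytopeAdj rk j c d) (hd' : IsPolytopeAdj rk j c d') :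
    d = d' := by
  have hrk := hP.strictMono_rank
  obtain ⟨F, hF, hFj⟩ := hP.exists_mem_rank_eq c (r := j - 1) ⟨by omega, by omega⟩
  obtain ⟨G, hG, hGj⟩ := hP.exists_mem_rank_eq c (r := j + 1) ⟨by omega, by omega⟩
  have hj : j ∈ Set.Icc (-1) n := ⟨by omega, by omega⟩
  obtain ⟨x, hx, hxj⟩ := hP.exists_mem_rank_eq c hj
  obtain ⟨y, hy, hyj⟩ := hP.exists_mem_rank_eq d hj
  obtain ⟨y', hy', hyj'⟩ := hP.exists_mem_rank_eq d' hj
  obtain ⟨H₁, H₂, -, hH⟩ := hP.diamond F G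
    (c.lt_of_rank_lt hrk hF hG (by omega)) (by omega)
  have between {s : Flag P} {z : P} (hFs : F ∈ s) (hGs : G ∈ s) (hz : z ∈ s) (hzj : rk z = j) :
      z = H₁ ∨ z = H₂ :=
    (hH z).1 ⟨s.lt_of_rank_lt hrk hFs hz (by omega), s.lt_of_rank_lt hrk hz hGs (by omega)⟩
  have hxH := between hF hG hx hxj
  have hyH := between ((hd.2 F (by omega)).1 hF) ((hd.2 G (by omega)).1 hG) hy hyj
  have hyH' := between ((hd'.2 F (by omega)).1 hF) ((hd'.2 G (by omega)).1 hG) hy' hyj'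
  have hxy : x ≠ y := by
    rintro rfl
    exact hd.1 (Flag.eq_of_mem_of_mem hrk hd.2 hxj hx hy)
  have hxy' : x ≠ y' := by
    rintro rfl
    exact hd'.1 (Flag.eq_of_mem_of_mem hrk hd'.2 hxj hx hy')
  have hyy : y = y' := by grind
  exact Flag.eq_of_mem_of_mem hrk (fun z hz => (hd.2 z hz).symm.trans (hd'.2 z hz)) hyj hy
    (hyy ▸ hy')

end IsAbstractPolytope

/-- **In a regular polytope, the stabilizer of any flag in the monodromy group is
trivial.**  Here `g j` is the monodromy generator sending each flag `Φ` to its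
unique `j`-adjacent flag `Φ^j`, and `Mon(R)` is the subgroup of the symmetric
group on the flags generated by the `g j`. -/
theorem monodromy_stabilizer_trivial_of_regular {n : ℕ} {P : Type} [PartialOrder P]
    (rk : P → ℤ) (hP : IsAbstractPolytope (n : ℤ) rk)
    (hreg : IsRegularPolytope (P := P))
    (g : Fin n → Equiv.Perm (Flag P))
    (hg : ∀ (j : Fin n) (Φ : Flag P), IsPolytopeAdj rk (j : ℤ) Φ (g j Φ)) :
    ∀ Λ : Flag P, ∀ w ∈ Subgroup.closure (Set.range g), w Λ = Λ → w = 1 := by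
  intro Λ w hw hΛ
  have commutes (e : P ≃o P) : w ∈ Subgroup.centralizer {(Flag.map e : Equiv.Perm (Flag P))} := by
    refine (Subgroup.closure_le _).2 ?_ hw
    rintro _ ⟨j, rfl⟩
    refine Subgroup.mem_centralizer_singleton_iff.2 (Equiv.ext fun Φ => ?_)
    exact hP.adj_unique (by omega) (by omega) (hg j (Flag.map e Φ))
      ((hg j Φ).map e (hP.rank_apply e))
  ext1 Φ
  obtain ⟨e, he⟩ := hreg Λ Φ
  obtain rfl : Flag.map e Λ = Φ := Flag.ext he
  have := Equiv.congr_fun (Subgroup.mem_centralizer_singleton_iff.1 (commutes e)) Λ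
  simpa [hΛ] using this
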